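/- Let V = R^{2n+1} with orthonormal basis e_0, e_1, ..., e_{2n} and the standard orientation given by e^0 ∧ e^1 ∧ ... ∧ e^{2n}. For 0 ≤ i ≤ n let α_i = (1/(i!(n-i)!)) Σ_{σ ∈ S_n} sgn(σ) e^{σ(1)} ∧ ... ∧ e^{σ(i)} ∧ e^{n+σ(i+1)} ∧ ... ∧ e^{n+σ(n)}. Then the Hodge star satisfies *α_i = (-1)^i e^0 ∧ α_{n-i}. -/

import Mathlib

set_option synthInstance.maxHeartbeats 1000000

/-- The model for the dual basis covector `e^j` of `ℝ^m`, as a degree-one element of the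
exterior algebra of the dual space. -/
noncomputable def eD (m : ℕ) (j : Fin m) :
    ExteriorAlgebra ℝ (Module.Dual ℝ (Fin m → ℝ)) :=
  ExteriorAlgebra.ι ℝ ((Pi.basisFun ℝ (Fin m)).coord j)

/-- The basis monomial `e^{j_1} ∧ ⋯ ∧ e^{j_k}` indexed by a finite set `S = {j_1 < ⋯ < j_k}`. -/
noncomputable def eSet (m : ℕ) (S : Finset (Fin m)) :
    ExteriorAlgebra ℝ (Module.Dual ℝ (Fin m → ℝ)) :=
  ((S.sort (· ≤ ·)).map (eD m)).prod

/-- `H` is the Hodge star operator of `ℝ^m` with its standard inner product (for which the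
basis `e_0, …, e_{m-1}` is orthonormal) and the standard orientation `e^0 ∧ ⋯ ∧ e^{m-1}`:
it is linear and characterized on basis monomials by `H(e^S) ∈ ℝ·e^{Sᶜ}` together with the
defining property `e^S ∧ H(e^S) = vol`. -/
def IsHodgeStar (m : ℕ)
    (H : ExteriorAlgebra ℝ (Module.Dual ℝ (Fin m → ℝ)) →ₗ[ℝ]
      ExteriorAlgebra ℝ (Module.Dual ℝ (Fin m → ℝ))) : Prop :=
  ∀ S : Finset (Fin m),
    (∃ c : ℝ, H (eSet m S) = c • eSet m Sᶜ) ∧ eSet m S * H (eSet m S) = eSet m Finset.univ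

/-- The Griffiths `n`-form `α_i` on `ℝ^{2n+1}` with orthonormal basis `e_0, e_1, …, e_{2n}`:
`α_i = (1/(i!(n-i)!)) ∑_{σ ∈ S_n} sgn(σ) e^{σ(1)} ∧ ⋯ ∧ e^{σ(i)} ∧ e^{n+σ(i+1)} ∧ ⋯ ∧ e^{n+σ(n)}`. -/
noncomputable def alphaO (n i : ℕ) :
    ExteriorAlgebra ℝ (Module.Dual ℝ (Fin (n + n + 1) → ℝ)) :=
  ((i.factorial * (n - i).factorial : ℝ))⁻¹ •
    ∑ σ : Equiv.Perm (Fin n), (((Equiv.Perm.sign σ : ℤ) : ℝ)) •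
      (List.ofFn (fun k : Fin n =>
        if (k : ℕ) < i then eD (n + n + 1) ((Fin.castAdd n (σ k)).succ)
        else eD (n + n + 1) ((Fin.natAdd n (σ k)).succ))).prod

/-!
Each term of `α_i` is a monomial `e^a ∧ e^{n+b}`, where the word `ab` is a rearrangement of
`1, …, n` with `|a| = i`. Its complementary monomial is `e^0 ∧ e^b ∧ e^{n+a}`, and

  `e^a ∧ e^{n+b} ∧ e^0 ∧ e^b ∧ e^{n+a} = ± e^0 ∧ (e^a ∧ e^b) ∧ (e^{n+a} ∧ e^{n+b})`.

The right-hand side is `± vol`, because sorting `ab` in both blocks costs the same sign twice. Hence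
`*(e^a ∧ e^{n+b}) = (-1)^{i + i(n-i)} e^0 ∧ e^b ∧ e^{n+a}`. The factor `(-1)^{i(n-i)}` is the sign
of the rotation taking `ab` to `ba`, so it disappears when the sum defining `α_{n-i}` is reindexed
by that rotation.
-/

lemma intCast_units_smul {R M : Type*} [Ring R] [AddCommGroup M] [Module R M] (ε : ℤˣ) (x : M) :
    ((ε : ℤ) : R) • x = ε • x := by
  rw [Int.cast_smul_eq_zsmul, Units.smul_def]

section AnticommutingProducts

variable {A : Type*} [Ring A]

lemma mul_list_prod_of_anticommute {x : A} {L : List A} (h : ∀ y ∈ L, x * y = -(y * x)) :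
    x * L.prod = (-1 : ℤˣ) ^ L.length • (L.prod * x) := by
  induction L with
  | nil => simp
  | cons y L ih =>
    have hxL := ih fun z hz => h z (List.mem_cons_of_mem y hz)
    rw [List.prod_cons, ← mul_assoc, h y List.mem_cons_self, neg_mul, mul_assoc, hxL,
      mul_smul_comm, ← mul_assoc, List.length_cons, pow_succ', mul_smul, Units.neg_smul, one_smul]

lemma list_prod_mul_list_prod_of_anticommute {L L' : List A}
    (h : ∀ x ∈ L, ∀ y ∈ L', x * y = -(y * x)) :
    L.prod * L'.prod = (-1 : ℤˣ) ^ (L.length * L'.length) • (L'.prod * L.prod) := by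
  induction L with
  | nil => simp
  | cons x L ih =>
    have hLL' := ih fun z hz => h z (List.mem_cons_of_mem x hz)
    rw [List.prod_cons, mul_assoc, hLL', mul_smul_comm, ← mul_assoc,
      mul_list_prod_of_anticommute (h x List.mem_cons_self), smul_mul_assoc, smul_smul, mul_assoc,
      ← pow_add, List.length_cons, add_one_mul]

/- One sign serves every family `f`, so two blocks rearranged in the same way together contribute
the sign `ε * ε = 1`. -/
lemma exists_sign_prod_map_of_perm {α : Type*} {l l' : List α} (hl : l.Perm l') :
    ∃ ε : ℤˣ, ∀ f : α → A, (∀ a b, f a * f b = -(f b * f a)) →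
      (l.map f).prod = ε • (l'.map f).prod := by
  induction hl with
  | nil => exact ⟨1, by simp⟩
  | cons a _ ih =>
    obtain ⟨ε, hε⟩ := ih
    refine ⟨ε, fun f hf => ?_⟩
    rw [List.map_cons, List.map_cons, List.prod_cons, List.prod_cons, hε f hf, mul_smul_comm]
  | swap a b l =>
    refine ⟨-1, fun f hf => ?_⟩
    simp only [List.map_cons, List.prod_cons]
    rw [← mul_assoc, hf, neg_mul, mul_assoc, Units.neg_smul, one_smul]
  | trans _ _ ih₁ ih₂ =>
    obtain ⟨ε₁, h₁⟩ := ih₁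
    obtain ⟨ε₂, h₂⟩ := ih₂
    exact ⟨ε₁ * ε₂, fun f hf => by rw [h₁ f hf, h₂ f hf, smul_smul]⟩

end AnticommutingProducts

lemma exteriorAlgebra_basis_apply_eq_prod_sort {I R M : Type*} [LinearOrder I] [CommRing R]
    [AddCommGroup M] [Module R M] (b : Module.Basis I R M) (S : Finset I) :
    b.ExteriorAlgebra S = ((S.sort (· ≤ ·)).map fun j => ExteriorAlgebra.ι R (b j)).prod := by
  rw [ExteriorAlgebra.basis_apply_ofCard b rfl]
  unfold ExteriorAlgebra.ιMulti_family
  rw [ExteriorAlgebra.ιMulti_apply, ← S.listMap_orderEmbOfFin_finRange rfl,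
    List.ofFn_eq_map, List.map_map]
  rfl

section Monomials

variable {m : ℕ}

lemma eSet_ne_zero (S : Finset (Fin m)) : eSet m S ≠ 0 := by
  have hS : eSet m S = (Pi.basisFun ℝ (Fin m)).dualBasis.ExteriorAlgebra S := by
    simp only [exteriorAlgebra_basis_apply_eq_prod_sort, Module.Basis.coe_dualBasis]
    rfl
  exact hS ▸ Module.Basis.ne_zero _ S

lemma eD_anticommute (j k : Fin m) : eD m j * eD m k = -(eD m k * eD m j) :=
  eq_neg_of_add_eq_zero_left (ExteriorAlgebra.ι_add_mul_swap _ _)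

lemma prod_map_eD_mul_comm (L L' : List (Fin m)) :
    (L.map (eD m)).prod * (L'.map (eD m)).prod =
      (-1 : ℤˣ) ^ (L.length * L'.length) • ((L'.map (eD m)).prod * (L.map (eD m)).prod) := by
  have h : ∀ x ∈ L.map (eD m), ∀ y ∈ L'.map (eD m), x * y = -(y * x) :=
    List.forall_mem_map.2 fun j _ => List.forall_mem_map.2 fun k _ => eD_anticommute j k
  simpa only [List.length_map] using list_prod_mul_list_prod_of_anticommute h

lemma exists_sign_prod_eq_eSet {L : List (Fin m)} {S : Finset (Fin m)} (hL : L.Nodup)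
    (hS : ∀ j, j ∈ L ↔ j ∈ S) : ∃ ε : ℤˣ, (L.map (eD m)).prod = ε • eSet m S := by
  have hsort : L.Perm (S.sort (· ≤ ·)) :=
    (List.perm_ext_iff_of_nodup hL (Finset.sort_nodup _ _)).2 (by simpa using hS)
  exact (exists_sign_prod_map_of_perm hsort).imp fun _ hε => hε (eD m) eD_anticommute

end Monomials

namespace IsHodgeStar

variable {m : ℕ} {H : ExteriorAlgebra ℝ (Module.Dual ℝ (Fin m → ℝ)) →ₗ[ℝ]
  ExteriorAlgebra ℝ (Module.Dual ℝ (Fin m → ℝ))}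

lemma prod_mul_apply (hH : IsHodgeStar m H) {L : List (Fin m)} (hL : L.Nodup) :
    (L.map (eD m)).prod * H (L.map (eD m)).prod = eSet m Finset.univ := by
  obtain ⟨ε, hε⟩ := exists_sign_prod_eq_eSet (S := L.toFinset) hL (by simp)
  rw [hε, H.map_smul_of_tower, smul_mul_smul_comm, Int.units_mul_self, one_smul, (hH _).2]

lemma exists_apply_eq_smul_prod (hH : IsHodgeStar m H) {L L' : List (Fin m)}
    (hLL' : (L ++ L').Perm (List.finRange m)) :
    ∃ c : ℝ, H (L.map (eD m)).prod = c • (L'.map (eD m)).prod := by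
  obtain ⟨hL, hL', hdisj⟩ := List.nodup_append'.1 (hLL'.nodup_iff.2 (List.nodup_finRange m))
  have hcompl : ∀ j, j ∈ L' ↔ j ∈ L.toFinsetᶜ := fun j => by
    have hj : j ∈ L ∨ j ∈ L' := List.mem_append.1 (hLL'.mem_iff.2 (List.mem_finRange j))
    rw [Finset.mem_compl, List.mem_toFinset]
    exact ⟨fun h' h => hdisj h h', hj.resolve_left⟩
  obtain ⟨ε, hε⟩ := exists_sign_prod_eq_eSet (S := L.toFinset) hL (by simp)
  obtain ⟨ε', hε'⟩ := exists_sign_prod_eq_eSet hL' hcompl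
  obtain ⟨c, hc⟩ := (hH L.toFinset).1
  have hcompl' : eSet m L.toFinsetᶜ = ε' • (L'.map (eD m)).prod := by
    rw [hε', smul_smul, Int.units_mul_self, one_smul]
  refine ⟨((ε : ℤ) : ℝ) * c * ((ε' : ℤ) : ℝ), ?_⟩
  rw [hε, H.map_smul_of_tower, hc, hcompl', mul_smul, mul_smul, intCast_units_smul,
    intCast_units_smul]

theorem apply_prod_eq_smul (hH : IsHodgeStar m H) {L L' : List (Fin m)}
    (hLL' : (L ++ L').Perm (List.finRange m)) {ε : ℤˣ}
    (hvol : (L.map (eD m)).prod * (L'.map (eD m)).prod = ε • eSet m Finset.univ) :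
    H (L.map (eD m)).prod = ε • (L'.map (eD m)).prod := by
  have hL : L.Nodup := (hLL'.nodup_iff.2 (List.nodup_finRange m)).of_append_left
  obtain ⟨c, hc⟩ := hH.exists_apply_eq_smul_prod hLL'
  have hcvol : c • ε • eSet m Finset.univ = eSet m Finset.univ := by
    rw [← hvol, ← mul_smul_comm, ← hc, hH.prod_mul_apply hL]
  have hcε : c • eSet m Finset.univ = ((ε : ℤ) : ℝ) • eSet m Finset.univ := by
    calc c • eSet m Finset.univ
        = ε • c • ε • eSet m Finset.univ := by
          rw [smul_comm ε, smul_smul ε, Int.units_mul_self, one_smul]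
      _ = ((ε : ℤ) : ℝ) • eSet m Finset.univ := by rw [hcvol, intCast_units_smul]
  rw [hc, smul_left_injective ℝ (eSet_ne_zero Finset.univ) hcε, intCast_units_smul]

end IsHodgeStar

lemma neg_one_pow_add_mul_neg_one_pow_mul_add (p q : ℕ) :
    (-1 : ℤˣ) ^ (p + q) * (-1) ^ (q * (q + p)) = (-1) ^ (p + p * q) := by
  have hexp : p + q + q * (q + p) = p + p * q + q * (q + 1) := by ring
  rw [← pow_add, hexp, pow_add, (Nat.even_mul_succ_self q).neg_one_pow, mul_one]

section BlockMonomials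

variable {n : ℕ}

/-- The position in `e^0, …, e^{2n}` of the covectors of the first block `e^1, …, e^n`.
As `Fin n` starts at `0`, the covector `e^k` of the paper has position `firstIdx (k - 1)`. -/
def firstIdx (k : Fin n) : Fin (n + n + 1) := (Fin.castAdd n k).succ

/-- The position in `e^0, …, e^{2n}` of the covectors of the second block `e^{n+1}, …, e^{2n}`,
numbered from `0` as in `firstIdx`. -/
def secondIdx (k : Fin n) : Fin (n + n + 1) := (Fin.natAdd n k).succ

/-- The positions of the factors of `e^{a_1} ∧ ⋯ ∧ e^{a_p} ∧ e^{n+b_1} ∧ ⋯ ∧ e^{n+b_q}`, listed in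
that order. -/
def blockIdx (a b : List (Fin n)) : List (Fin (n + n + 1)) :=
  a.map firstIdx ++ b.map secondIdx

/-- The monomial `e^{a_1} ∧ ⋯ ∧ e^{a_p} ∧ e^{n+b_1} ∧ ⋯ ∧ e^{n+b_q}`; those with `a ++ b` a
rearrangement of `1, …, n` are the terms of the forms `α_i`. -/
noncomputable def blockMonomial (a b : List (Fin n)) :
    ExteriorAlgebra ℝ (Module.Dual ℝ (Fin (n + n + 1) → ℝ)) :=
  ((blockIdx a b).map (eD (n + n + 1))).prod

lemma blockMonomial_eq_mul (a b : List (Fin n)) :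
    blockMonomial a b =
      ((a.map firstIdx).map (eD (n + n + 1))).prod *
        ((b.map secondIdx).map (eD (n + n + 1))).prod := by
  rw [blockMonomial, blockIdx, List.map_append, List.prod_append]

lemma zero_cons_blockIdx_finRange :
    0 :: blockIdx (List.finRange n) (List.finRange n) = List.finRange (n + n + 1) := by
  rw [List.finRange_succ, ← List.ofFn_id (n + n), List.ofFn_add, List.map_append, blockIdx,
    ← List.ofFn_eq_map, ← List.ofFn_eq_map, List.map_ofFn, List.map_ofFn]
  rfl

lemma blockIdx_append_perm_finRange {a b : List (Fin n)}
    (hab : (a ++ b).Perm (List.finRange n)) :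
    (blockIdx a b ++ 0 :: blockIdx b a).Perm (List.finRange (n + n + 1)) := by
  have hfirst := hab.map firstIdx
  have hsecond := hab.map secondIdx
  rw [List.map_append] at hfirst hsecond
  rw [← zero_cons_blockIdx_finRange]
  refine List.Perm.trans ?_ ((hfirst.append hsecond).cons 0)
  rw [← Multiset.coe_eq_coe]
  simp only [blockIdx, ← Multiset.coe_add, ← Multiset.cons_coe, ← Multiset.singleton_add]
  abel

lemma eSet_univ_eq_of_perm {l : List (Fin n)} (hl : l.Perm (List.finRange n)) :
    eSet (n + n + 1) Finset.univ = eD (n + n + 1) 0 * blockMonomial l l := by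
  obtain ⟨ε, hε⟩ := exists_sign_prod_map_of_perm
    (A := ExteriorAlgebra ℝ (Module.Dual ℝ (Fin (n + n + 1) → ℝ))) hl
  have hsigns : blockMonomial l l = blockMonomial (List.finRange n) (List.finRange n) := by
    simp only [blockMonomial_eq_mul, List.map_map]
    rw [hε (eD _ ∘ firstIdx) fun _ _ => eD_anticommute _ _,
      hε (eD _ ∘ secondIdx) fun _ _ => eD_anticommute _ _, smul_mul_smul_comm,
      Int.units_mul_self, one_smul]
  rw [hsigns, eSet, Fin.sort_univ, ← zero_cons_blockIdx_finRange, List.map_cons, List.prod_cons,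
    blockMonomial]

/- Move `e^0` to the front, then `e^{n+b}` behind `e^b ∧ e^{n+a}`: both blocks are then arranged
in the order `a ++ b`. -/
lemma blockMonomial_mul_eD_zero_mul {a b : List (Fin n)}
    (hab : (a ++ b).Perm (List.finRange n)) :
    blockMonomial a b * (eD (n + n + 1) 0 * blockMonomial b a) =
      (-1 : ℤˣ) ^ (a.length + a.length * b.length) • eSet (n + n + 1) Finset.univ := by
  have hzero : blockMonomial a b * eD (n + n + 1) 0 =
      (-1 : ℤˣ) ^ (a.length + b.length) • (eD (n + n + 1) 0 * blockMonomial a b) := by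
    simpa [blockMonomial, blockIdx] using prod_map_eD_mul_comm (blockIdx a b) [0]
  have hsecond : ((b.map secondIdx).map (eD (n + n + 1))).prod * blockMonomial b a =
      (-1 : ℤˣ) ^ (b.length * (b.length + a.length)) •
        (blockMonomial b a * ((b.map secondIdx).map (eD (n + n + 1))).prod) := by
    simpa [blockMonomial, blockIdx] using
      prod_map_eD_mul_comm (b.map secondIdx) (blockIdx b a)
  have hjoin : blockMonomial (a ++ b) (a ++ b) = ((a.map firstIdx).map (eD (n + n + 1))).prod *
      (blockMonomial b a * ((b.map secondIdx).map (eD (n + n + 1))).prod) := by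
    simp only [blockMonomial_eq_mul, List.map_append, List.prod_append, mul_assoc]
  calc blockMonomial a b * (eD (n + n + 1) 0 * blockMonomial b a)
      = (-1 : ℤˣ) ^ (a.length + b.length) •
          (eD (n + n + 1) 0 * (((a.map firstIdx).map (eD (n + n + 1))).prod *
            (((b.map secondIdx).map (eD (n + n + 1))).prod * blockMonomial b a))) := by
        rw [← mul_assoc, hzero, smul_mul_assoc, mul_assoc, blockMonomial_eq_mul a b, mul_assoc]
    _ = ((-1 : ℤˣ) ^ (a.length + b.length) * (-1) ^ (b.length * (b.length + a.length))) •
          (eD (n + n + 1) 0 * blockMonomial (a ++ b) (a ++ b)) := by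
        rw [hsecond, mul_smul_comm, mul_smul_comm, smul_smul, ← hjoin]
    _ = (-1 : ℤˣ) ^ (a.length + a.length * b.length) • eSet (n + n + 1) Finset.univ := by
        rw [neg_one_pow_add_mul_neg_one_pow_mul_add, ← eSet_univ_eq_of_perm hab]

section HodgeStar

variable {H : ExteriorAlgebra ℝ (Module.Dual ℝ (Fin (n + n + 1) → ℝ)) →ₗ[ℝ]
  ExteriorAlgebra ℝ (Module.Dual ℝ (Fin (n + n + 1) → ℝ))}

theorem IsHodgeStar.apply_blockMonomial (hH : IsHodgeStar (n + n + 1) H) {a b : List (Fin n)}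
    (hab : (a ++ b).Perm (List.finRange n)) :
    H (blockMonomial a b) =
      (-1 : ℤˣ) ^ (a.length + a.length * b.length) •
        (eD (n + n + 1) 0 * blockMonomial b a) := by
  have hvol := blockMonomial_mul_eD_zero_mul hab
  rw [blockMonomial, blockMonomial, ← List.prod_cons, ← List.map_cons] at hvol ⊢
  exact hH.apply_prod_eq_smul (blockIdx_append_perm_finRange hab) hvol

lemma IsHodgeStar.apply_blockMonomial_take_drop (hH : IsHodgeStar (n + n + 1) H)
    {l : List (Fin n)} (hl : l.Perm (List.finRange n)) {i : ℕ} (hi : i ≤ n) :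
    H (blockMonomial (l.take i) (l.drop i)) =
      (-1 : ℤˣ) ^ (i + i * (n - i)) •
        (eD (n + n + 1) 0 * blockMonomial (l.drop i) (l.take i)) := by
  have hlen : l.length = n := by simpa only [List.length_finRange] using hl.length_eq
  have hsplit : (l.take i ++ l.drop i).Perm (List.finRange n) := by rwa [List.take_append_drop]
  simpa only [List.length_take, List.length_drop, hlen, min_eq_left hi] using
    hH.apply_blockMonomial hsplit

end HodgeStar

end BlockMonomials

section Rotations

lemma map_finRotate_finRange (n : ℕ) :
    (List.finRange n).map (finRotate n) = (List.finRange n).rotate 1 := by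
  refine List.ext_getElem (by simp) fun k hk _ => ?_
  have : NeZero n := ⟨by rintro rfl; simp at hk⟩
  simp [List.getElem_rotate, finRotate_apply, Fin.ext_iff, Fin.val_add]

lemma ofFn_mul_finRotate_pow {n : ℕ} (σ : Equiv.Perm (Fin n)) (i : ℕ) :
    List.ofFn ⇑(σ * finRotate n ^ i) = (List.ofFn σ).rotate i := by
  induction i with
  | zero => simp
  | succ i ih =>
    rw [← List.rotate_rotate, ← ih, pow_succ, ← mul_assoc, List.ofFn_eq_map, List.ofFn_eq_map,
      ← List.map_rotate, ← map_finRotate_finRange, List.map_map, Equiv.Perm.coe_mul]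

lemma sign_finRotate_pow {n i : ℕ} (hi : i ≤ n) :
    Equiv.Perm.sign (finRotate n ^ i) = (-1) ^ (i * (n - i)) := by
  rw [map_pow, sign_finRotate, ← pow_mul]
  obtain ⟨d, rfl⟩ := Nat.exists_eq_add_of_le hi
  cases i with
  | zero => simp
  | succ i =>
    have hexp : (i + 1 + d - 1) * (i + 1) = (i + 1) * (i + 1 + d - (i + 1)) + i * (i + 1) := by
      rw [Nat.add_sub_cancel_left, Nat.add_right_comm, Nat.add_sub_cancel]
      ring
    rw [hexp, pow_add, (Nat.even_mul_succ_self i).neg_one_pow, mul_one]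

end Rotations

section Alpha

variable {n : ℕ}

lemma ofFn_perm_finRange (σ : Equiv.Perm (Fin n)) : (List.ofFn σ).Perm (List.finRange n) := by
  rw [List.ofFn_eq_map]
  exact σ.map_finRange_perm

lemma prod_ofFn_ite_eq_blockMonomial (i : ℕ) (σ : Fin n → Fin n) :
    (List.ofFn fun k : Fin n =>
        if (k : ℕ) < i then eD (n + n + 1) ((Fin.castAdd n (σ k)).succ)
        else eD (n + n + 1) ((Fin.natAdd n (σ k)).succ)).prod =
      blockMonomial ((List.ofFn σ).take i) ((List.ofFn σ).drop i) := by
  rw [blockMonomial, blockIdx]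
  congr 1
  refine List.ext_getElem (by grind) fun k hk _ => ?_
  rw [List.length_ofFn] at hk
  by_cases hki : k < i
  · simp [hki, hk, firstIdx]
  · have hik : i ≤ n := by omega
    simp [List.getElem_append, hki, hik, Nat.add_sub_cancel' (not_lt.1 hki), secondIdx]

lemma alphaO_eq_sum_blockMonomial (n i : ℕ) :
    alphaO n i = (i.factorial * (n - i).factorial : ℝ)⁻¹ •
      ∑ σ : Equiv.Perm (Fin n), Equiv.Perm.sign σ •
        blockMonomial ((List.ofFn σ).take i) ((List.ofFn σ).drop i) := by
  simp only [alphaO, prod_ofFn_ite_eq_blockMonomial, intCast_units_smul]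

/- Substitute `σ * finRotate n ^ i` for `σ`: it moves the first `i` letters of `σ` to the end. -/
lemma alphaO_sub_eq_sum_blockMonomial {i : ℕ} (hi : i ≤ n) :
    alphaO n (n - i) = (i.factorial * (n - i).factorial : ℝ)⁻¹ •
      ∑ σ : Equiv.Perm (Fin n), (Equiv.Perm.sign σ * (-1) ^ (i * (n - i))) •
        blockMonomial ((List.ofFn σ).drop i) ((List.ofFn σ).take i) := by
  rw [alphaO_eq_sum_blockMonomial, Nat.sub_sub_self hi, mul_comm ((n - i).factorial : ℝ),
    ← Equiv.sum_comp (Equiv.mulRight (finRotate n ^ i))]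
  refine congrArg _ (Finset.sum_congr rfl fun σ _ => ?_)
  have hrotate : List.ofFn ⇑(σ * finRotate n ^ i) =
      (List.ofFn σ).drop i ++ (List.ofFn σ).take i := by
    rw [ofFn_mul_finRotate_pow, List.rotate_eq_drop_append_take (by simpa)]
  rw [Equiv.coe_mulRight, hrotate, map_mul, sign_finRotate_pow hi, List.take_left' (by simp),
    List.drop_left' (by simp)]

end Alpha

/-- on `ℝ^{2n+1}` with the standard orientation `e^0 ∧ e^1 ∧ ⋯ ∧ e^{2n}`,
the Hodge star satisfies `*α_i = (-1)^i e^0 ∧ α_{n-i}`. -/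
theorem stmt3 (n i : ℕ) (hi : i ≤ n)
    (H : ExteriorAlgebra ℝ (Module.Dual ℝ (Fin (n + n + 1) → ℝ)) →ₗ[ℝ]
      ExteriorAlgebra ℝ (Module.Dual ℝ (Fin (n + n + 1) → ℝ)))
    (hH : IsHodgeStar (n + n + 1) H) :
    H (alphaO n i) = ((-1 : ℝ) ^ i) • (eD (n + n + 1) 0 * alphaO n (n - i)) := by
  have hsign : (-1 : ℝ) ^ i = (((-1 : ℤˣ) ^ i : ℤˣ) : ℤ) := by simp
  calc H (alphaO n i)
      = (i.factorial * (n - i).factorial : ℝ)⁻¹ • ∑ σ : Equiv.Perm (Fin n),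
          Equiv.Perm.sign σ • (-1 : ℤˣ) ^ (i + i * (n - i)) •
            (eD (n + n + 1) 0 *
              blockMonomial ((List.ofFn σ).drop i) ((List.ofFn σ).take i)) := by
        simp only [alphaO_eq_sum_blockMonomial, map_sum, H.map_smul_of_tower,
          hH.apply_blockMonomial_take_drop (ofFn_perm_finRange _) hi]
    _ = (i.factorial * (n - i).factorial : ℝ)⁻¹ • (-1 : ℤˣ) ^ i • (eD (n + n + 1) 0 *
          ∑ σ : Equiv.Perm (Fin n), (Equiv.Perm.sign σ * (-1) ^ (i * (n - i))) •
            blockMonomial ((List.ofFn σ).drop i) ((List.ofFn σ).take i)) := by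
        simp only [Finset.mul_sum, Finset.smul_sum, mul_smul_comm, smul_smul, pow_add,
          mul_left_comm]
    _ = (-1 : ℝ) ^ i • (eD (n + n + 1) 0 * alphaO n (n - i)) := by
        rw [alphaO_sub_eq_sum_blockMonomial hi, hsign, intCast_units_smul, mul_smul_comm, smul_comm]
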